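/- arXiv:2010.03669 — 2 statements merged into one kernel-verified Lean document; each statement's English description precedes it below -/
import Mathlib

section
/- Symmetrized distance via non-decreasing rearrangements. Let N ≥ 2 and x, y ∈ ℤ^N. Then d_S(x, y) = ‖x̂ − ŷ‖_∞, where x̂ denotes the non-decreasing rearrangement of x and the symmetrized distance is d_S(x,y) = min_{π ∈ S_N} ‖x − πy‖_∞. -/
/-!
If `x̂` and `ŷ` are sorted and `σ` is a permutation, then for every `j` the interval between `x̂ j`
and `ŷ j` lies inside the one between `x̂ i` and `ŷ (σ i)` for some `i`. When `x̂ j ≤ ŷ j`, this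
holds for any `i ≤ j` with `j ≤ σ i`; such an `i` exists, since otherwise `σ` would inject the
finite set `{i | i ≤ j}` into itself and miss `j`. The other case is dual. Hence, among all
matchings of `x̂` with `ŷ`, the sorted one minimises the largest distance.
-/

section Intervals

open Set

variable {ι α : Type*} [LinearOrder ι]

theorem exists_ge_apply_le_of_injOn_Ici {f : ι → ι} {j : ι} (hfin : (Ici j).Finite)
    (hf : InjOn f (Ici j)) : ∃ i, j ≤ i ∧ f i ≤ j := by
  by_contra! h
  have hmaps : MapsTo f (Ici j) (Ici j) := fun i hi => (h i hi).le
  obtain ⟨i, hi, hij⟩ := ((hfin.injOn_iff_bijOn_of_mapsTo hmaps).1 hf).surjOn self_mem_Ici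
  exact (h i hi).ne' hij

theorem exists_le_le_apply_of_injOn_Iic {f : ι → ι} {j : ι} (hfin : (Iic j).Finite)
    (hf : InjOn f (Iic j)) : ∃ i, i ≤ j ∧ j ≤ f i :=
  exists_ge_apply_le_of_injOn_Ici (ι := ιᵒᵈ) hfin hf

variable [LinearOrder α] [Finite ι]

theorem exists_uIcc_subset_uIcc_apply_of_monotone {u v : ι → α} (hu : Monotone u) (hv : Monotone v)
    {f : ι → ι} (hf : Function.Injective f) (j : ι) :
    ∃ i, uIcc (u j) (v j) ⊆ uIcc (u i) (v (f i)) := by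
  rcases le_total (u j) (v j) with huv | hvu
  · obtain ⟨i, hij, hji⟩ := exists_le_le_apply_of_injOn_Iic (toFinite (Iic j)) hf.injOn
    refine ⟨i, ?_⟩
    rw [uIcc_of_le huv]
    exact (Icc_subset_Icc (hu hij) (hv hji)).trans Icc_subset_uIcc
  · obtain ⟨i, hji, hij⟩ := exists_ge_apply_le_of_injOn_Ici (toFinite (Ici j)) hf.injOn
    refine ⟨i, ?_⟩
    rw [uIcc_of_ge hvu]
    exact (Icc_subset_Icc (hv hij) (hu hji)).trans Icc_subset_uIcc'

end Intervals

section Matching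

variable {ι κ α β : Type*} [Fintype ι] [Fintype κ]

theorem sup_univ_comp_equiv [SemilatticeSup β] [OrderBot β] (e : ι ≃ κ) (f : κ → β) :
    (Finset.univ.sup fun i => f (e i)) = Finset.univ.sup f := by
  rw [← Finset.map_univ_equiv e, Finset.sup_map]
  rfl

variable [LinearOrder ι] [LinearOrder α] {d : α → α → β}

theorem sup_le_sup_apply_of_monotone [SemilatticeSup β] [OrderBot β]
    (hd : ∀ ⦃a b a' b'⦄, Set.uIcc a b ⊆ Set.uIcc a' b' → d a b ≤ d a' b')
    {u v : ι → α} (hu : Monotone u) (hv : Monotone v)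
    {f : ι → ι} (hf : Function.Injective f) :
    (Finset.univ.sup fun j => d (u j) (v j)) ≤ Finset.univ.sup fun j => d (u j) (v (f j)) := by
  refine Finset.sup_le fun j _ => ?_
  obtain ⟨i, hi⟩ := exists_uIcc_subset_uIcc_apply_of_monotone hu hv hf j
  exact (hd hi).trans (Finset.le_sup (f := fun j => d (u j) (v (f j))) (Finset.mem_univ i))

theorem dS_eq_dist_of_rearrangements_general [Lattice β] [OrderBot β]
    (hd : ∀ ⦃a b a' b'⦄, Set.uIcc a b ⊆ Set.uIcc a' b' → d a b ≤ d a' b')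
    {x y xh yh : ι → α}
    (hxh_mono : Monotone xh) (hxh_perm : ∃ π : Equiv.Perm ι, xh = x ∘ π)
    (hyh_mono : Monotone yh) (hyh_perm : ∃ π : Equiv.Perm ι, yh = y ∘ π) :
    (Finset.univ.inf' ⟨1, Finset.mem_univ 1⟩
        fun π : Equiv.Perm ι => Finset.univ.sup fun j => d (x j) (y (π j)))
      = Finset.univ.sup fun j => d (xh j) (yh j) := by
  obtain ⟨p, rfl⟩ := hxh_perm
  obtain ⟨q, rfl⟩ := hyh_perm
  have sup_reindex (π : Equiv.Perm ι) :
      (Finset.univ.sup fun j => d (x j) (y (π j)))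
        = Finset.univ.sup fun j => d ((x ∘ p) j) ((y ∘ q) ((q⁻¹ * π * p) j)) := by
    simpa using (sup_univ_comp_equiv p fun j => d (x j) (y (π j))).symm
  apply le_antisymm
  · refine (Finset.inf'_le _ (Finset.mem_univ (q * p⁻¹))).trans_eq ?_
    rw [sup_reindex]
    simp
  · refine Finset.le_inf' _ _ fun π _ => ?_
    rw [sup_reindex π]
    exact sup_le_sup_apply_of_monotone hd hxh_mono hyh_mono (Equiv.injective _)

end Matching

theorem natAbs_sub_le_of_uIcc_subset_uIcc {a b a' b' : ℤ} (h : Set.uIcc a b ⊆ Set.uIcc a' b') :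
    (a - b).natAbs ≤ (a' - b').natAbs := by
  rw [Set.uIcc_comm a, Set.uIcc_comm a'] at h
  exact Int.natAbs_le_iff_sq_le.2 (sq_le_sq.2 (Set.abs_sub_le_of_uIcc_subset_uIcc h))

/-- **Symmetrized distance via non-decreasing rearrangements.**
`xh` and `yh` are the non-decreasing rearrangements of `x` and `y`; the symmetrized distance
`d_S(x,y) = min_{π ∈ S_N} ‖x - π y‖_∞` equals `‖x̂ - ŷ‖_∞`. -/
theorem dS_eq_dist_of_rearrangements
    (N : ℕ) (hN : 2 ≤ N) (x y xh yh : Fin N → ℤ)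
    (hxh_mono : Monotone xh) (hxh_perm : ∃ π : Equiv.Perm (Fin N), xh = x ∘ π)
    (hyh_mono : Monotone yh) (hyh_perm : ∃ π : Equiv.Perm (Fin N), yh = y ∘ π) :
    (Finset.univ.inf' ⟨1, Finset.mem_univ 1⟩
        fun π : Equiv.Perm (Fin N) => Finset.univ.sup fun j => (x j - y (π j)).natAbs)
      = Finset.univ.sup fun j => (xh j - yh j).natAbs :=
  dS_eq_dist_of_rearrangements_general (d := fun a b : ℤ => (a - b).natAbs)
    (fun _ _ _ _ => natAbs_sub_le_of_uIcc_subset_uIcc) hxh_mono hxh_perm hyh_mono hyh_perm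
end

section
/- Rearrangement inequality for the ℓ^∞ norm. Let N ≥ 2 and let x, y ∈ ℤ^N both be non-decreasing (x_j ≤ x_{j+1} and y_j ≤ y_{j+1} for all 1 ≤ j ≤ N−1). Then for every permutation π ∈ S_N, ‖x − πy‖_∞ ≥ ‖x − y‖_∞. -/
/-!
Suppose `y j ≤ x j`. It suffices to find `k` with `x j ≤ x k` and `y (π k) ≤ y j`, since then
`x j - y j ≤ x k - y (π k)`. If there is none, then `x j ≤ x k` forces `y j < y (π k)`, hence
again `x j ≤ x (π k)` as `x` and `y` are ordered alike. So `y` exceeds `y j` at every point that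
`π` reaches from `j`; but `j` itself is one of them, a contradiction. The case `x j ≤ y j` is dual.
-/

section

open Function

variable {ι α β : Type*} {f : ι → ι} {j : ι}

theorem exists_le_and_comp_le_of_monovary [Preorder α] [LinearOrder β] {x : ι → α} {y : ι → β}
    (h : Monovary x y) (hj : j ∈ periodicPts f) : ∃ k, x j ≤ x k ∧ y (f k) ≤ y j := by
  by_contra! lt_comp
  have le_iterate (n : ℕ) : x j ≤ x (f^[n] j) := by
    induction n with
    | zero => rfl
    | succ n ih =>
      rw [iterate_succ_apply']
      exact h (lt_comp _ ih)
  obtain ⟨n, hn, hper⟩ := hj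
  obtain ⟨m, rfl⟩ := Nat.exists_eq_add_one.mpr hn
  have lt_self : y j < y (f^[m + 1] j) := by
    rw [iterate_succ_apply']
    exact lt_comp _ (le_iterate m)
  exact lt_self.ne' (congrArg y hper.eq)

theorem exists_le_and_le_comp_of_monovary [Preorder α] [LinearOrder β] {x : ι → α} {y : ι → β}
    (h : Monovary x y) (hj : j ∈ periodicPts f) : ∃ k, x k ≤ x j ∧ y j ≤ y (f k) :=
  exists_le_and_comp_le_of_monovary h.dual hj

theorem rearrangement_linf_general [AddCommGroup α] [LinearOrder α] [IsOrderedAddMonoid α]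
    {x y : ι → α} (h : Monovary x y) (hj : j ∈ periodicPts f) :
    ∃ k, |x j - y j| ≤ |x k - y (f k)| := by
  rcases le_total (y j) (x j) with hyx | hxy
  · obtain ⟨k, hxk, hyk⟩ := exists_le_and_comp_le_of_monovary h hj
    exact ⟨k, abs_le_abs_of_nonneg (sub_nonneg.mpr hyx) (sub_le_sub hxk hyk)⟩
  · obtain ⟨k, hxk, hyk⟩ := exists_le_and_le_comp_of_monovary h hj
    exact ⟨k, abs_le_abs_of_nonpos (sub_nonpos.mpr hxy) (sub_le_sub hxk hyk)⟩

end

/-- **Rearrangement inequality for the `ℓ^∞` norm.** If `x` and `y` are non-decreasing, then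
`‖x - π y‖_∞ ≥ ‖x - y‖_∞` for every permutation `π`. -/
theorem rearrangement_linf
    (N : ℕ) (hN : 2 ≤ N) (x y : Fin N → ℤ)
    (hx : Monotone x) (hy : Monotone y) (π : Equiv.Perm (Fin N)) :
    (Finset.univ.sup fun j => (x j - y j).natAbs) ≤
      Finset.univ.sup fun j => (x j - y (π j)).natAbs := by
  refine Finset.sup_le fun j _ => ?_
  obtain ⟨k, hk⟩ := rearrangement_linf_general (hx.monovary hy) (π.injective.mem_periodicPts j)
  exact Finset.le_sup_of_le (Finset.mem_univ k) (by zify; exact hk)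
end
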